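/- Let p ≥ 2 and let g : ℝ^n × ℝ^m → ℝ be p times continuously differentiable with L_p-Lipschitz p-th derivative, and let M ≥ √2 · p · L_p. Fix (x,y) ∈ ℝ^n × ℝ^m and let (x̃,ỹ) be a saddle point of the regularized Taylor model Ω_{(x,y),p,M}, i.e. Ω_{(x,y),p,M}(x̃, y') ≤ Ω_{(x,y),p,M}(x̃, ỹ) ≤ Ω_{(x,y),p,M}(x', ỹ) for all x', y'. Then ‖∇g(x̃,ỹ)‖₂^{(p+1)/p} / (2^{(2p²+p+1)/(2p)} · p · (p+1)! · M^{1/p}) ≤ g(x, ỹ) − g(x̃, y). -/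

import Mathlib

/-- The point of `ℝⁿ × ℝᵐ` (with the Euclidean/`L²` product structure) with coordinates
`(x, y)`. -/
noncomputable def mkZ {n m : ℕ} (x : EuclideanSpace ℝ (Fin n)) (y : EuclideanSpace ℝ (Fin m)) :
    WithLp 2 (EuclideanSpace ℝ (Fin n) × EuclideanSpace ℝ (Fin m)) :=
  (WithLp.equiv 2 (EuclideanSpace ℝ (Fin n) × EuclideanSpace ℝ (Fin m))).symm (x, y)

/-- The `p`-th order Taylor polynomial `Φ_{z,p}(ẑ) = Σ_{i=0}^p (1/i!) ∇ⁱ g(z)[ẑ − z]ⁱ`. -/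
noncomputable def taylorPoly {n m : ℕ} (p : ℕ)
    (g : WithLp 2 (EuclideanSpace ℝ (Fin n) × EuclideanSpace ℝ (Fin m)) → ℝ)
    (z zh : WithLp 2 (EuclideanSpace ℝ (Fin n) × EuclideanSpace ℝ (Fin m))) : ℝ :=
  ∑ i ∈ Finset.range (p + 1),
    (1 / (Nat.factorial i : ℝ)) * iteratedFDeriv ℝ i g z (fun _ => zh - z)

/-- The regularized Taylor model
`Ω_{(x,y),p,M}(x̂,ŷ) = Φ_{(x,y),p}(x̂,ŷ) + (M(√2)^{p−1}/(p+1)!)‖x̂ − x‖^{p+1}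
− (M(√2)^{p−1}/(p+1)!)‖ŷ − y‖^{p+1}`. -/
noncomputable def omegaModel {n m : ℕ} (p : ℕ) (M : ℝ)
    (g : WithLp 2 (EuclideanSpace ℝ (Fin n) × EuclideanSpace ℝ (Fin m)) → ℝ)
    (x : EuclideanSpace ℝ (Fin n)) (y : EuclideanSpace ℝ (Fin m)) :
    WithLp 2 (EuclideanSpace ℝ (Fin n) × EuclideanSpace ℝ (Fin m)) → ℝ :=
  fun zh =>
    taylorPoly p g (mkZ x y) zh
      + M * Real.sqrt 2 ^ (p - 1) / (Nat.factorial (p + 1) : ℝ)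
          * ‖(WithLp.equiv 2 (EuclideanSpace ℝ (Fin n) × EuclideanSpace ℝ (Fin m)) zh).1 - x‖ ^ (p + 1)
      - M * Real.sqrt 2 ^ (p - 1) / (Nat.factorial (p + 1) : ℝ)
          * ‖(WithLp.equiv 2 (EuclideanSpace ℝ (Fin n) × EuclideanSpace ℝ (Fin m)) zh).2 - y‖ ^ (p + 1)

/-!
The integral form of the Taylor remainder bounds the distance from `g` and from `∇g` to their Taylor
polynomials at `z = (x, y)` by multiples of `‖w - z‖ ^ (p + 1)` and `‖w - z‖ ^ p`; the second bound
is the first one for `∇g`, because the Taylor polynomial of `∇g` is the gradient of that of `g`.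

At the saddle point the gradient of the model vanishes, so the gradient of the Taylor polynomial is
that of the regularizer, and `‖∇g(x̃, ỹ)‖` is at most a multiple of `‖(x̃ - x, ỹ - y)‖ ^ p`.
The saddle inequalities also give `Ω(x̃, y) ≤ Ω(x̃, ỹ) ≤ Ω(x, ỹ)`, where one of the two regularizing
terms vanishes at either end; up to the Taylor remainder of `g` this is
`‖x̃ - x‖ ^ (p + 1) + ‖ỹ - y‖ ^ (p + 1) ≤ C (g(x, ỹ) - g(x̃, y))`. The power mean inequality bounds
`‖(x̃ - x, ỹ - y)‖ ^ (p + 1)` by the left-hand side.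
-/

section SaddlePoint

open Set Filter WithLp
open scoped Nat Topology

section IteratedFDeriv

variable {𝕜 E F : Type*} [NontriviallyNormedField 𝕜]
  [NormedAddCommGroup E] [NormedSpace 𝕜 E] [NormedAddCommGroup F] [NormedSpace 𝕜 F]
  {f : E → F} {n : ℕ} {z w : E}

theorem norm_iteratedFDeriv_fderiv_sub_iteratedFDeriv_fderiv :
    ‖iteratedFDeriv 𝕜 n (fderiv 𝕜 f) w - iteratedFDeriv 𝕜 n (fderiv 𝕜 f) z‖ =
      ‖iteratedFDeriv 𝕜 (n + 1) f w - iteratedFDeriv 𝕜 (n + 1) f z‖ := by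
  simp only [iteratedFDeriv_succ_eq_comp_right, Function.comp_apply, ← dist_eq_norm]
  exact ((continuousMultilinearCurryRightEquiv' 𝕜 n E F).symm.isometry.dist_eq _ _).symm

variable [IsRCLikeNormedField 𝕜]

theorem iteratedFDeriv_comp_swap_zero_one (hf : ContDiffAt 𝕜 (n + 2) f z) (v : Fin (n + 2) → E) :
    iteratedFDeriv 𝕜 (n + 2) f z (v ∘ Equiv.swap 0 1) = iteratedFDeriv 𝕜 (n + 2) f z v := by
  have hf₂ : ContDiffAt 𝕜 2 (iteratedFDeriv 𝕜 n f) z := hf.iteratedFDeriv_right (by rw [add_comm])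
  have hsymm : IsSymmSndFDerivAt 𝕜 (iteratedFDeriv 𝕜 n f) z := hf₂.isSymmSndFDerivAt (by simp)
  have hdiff : DifferentiableAt 𝕜 (fderiv 𝕜 (iteratedFDeriv 𝕜 n f)) z :=
    (hf₂.fderiv_right (m := 1) le_rfl).differentiableAt one_ne_zero
  have hdiff_succ : DifferentiableAt 𝕜 (iteratedFDeriv 𝕜 (n + 1) f) z :=
    hf.differentiableAt_iteratedFDeriv (by norm_cast; lia)
  have apply_eq (m : Fin (n + 2) → E) : iteratedFDeriv 𝕜 (n + 2) f z m =
      fderiv 𝕜 (fderiv 𝕜 (iteratedFDeriv 𝕜 n f)) z (m 0) (m 1) (Fin.tail (Fin.tail m)) := by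
    rw [hdiff_succ.iteratedFDeriv_succ_apply_left']
    simp only [iteratedFDeriv_succ_apply_left (n := n)]
    rw [fderiv_continuousMultilinear_apply_const_apply (by fun_prop),
      fderiv_clm_apply hdiff (by fun_prop)]
    simp [Fin.tail]
  rw [apply_eq, apply_eq, hsymm.eq]
  congr 1

theorem iteratedFDeriv_succ_apply_removeNth (hf : ContDiffAt 𝕜 (n + 1) f z) (j : Fin (n + 1))
    (v : Fin (n + 1) → E) :
    iteratedFDeriv 𝕜 (n + 1) f z v = iteratedFDeriv 𝕜 n (fderiv 𝕜 f) z (j.removeNth v) (v j) := by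
  induction n generalizing z with
  | zero =>
    obtain rfl := Fin.fin_one_eq_zero j
    simp
  | succ n ih =>
    have hf' : ContDiffAt 𝕜 (n + 1) (fderiv 𝕜 f) z := hf.fderiv_right (by norm_cast)
    have tail_removeNth (i : Fin (n + 1)) (v : Fin (n + 2) → E) :
        Fin.tail (i.succ.removeNth v) = i.removeNth (Fin.tail v) := by
      ext k
      simp [Fin.tail, Fin.removeNth_apply]
    have removeNth_zero (i : Fin (n + 1)) (v : Fin (n + 2) → E) : i.succ.removeNth v 0 = v 0 := by
      simp [Fin.removeNth_apply]
    have apply_succ (i : Fin (n + 1)) (v : Fin (n + 2) → E) : iteratedFDeriv 𝕜 (n + 2) f z v =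
        iteratedFDeriv 𝕜 (n + 1) (fderiv 𝕜 f) z (i.succ.removeNth v) (v i.succ) := by
      have ih_nhds : (fun w => iteratedFDeriv 𝕜 (n + 1) f w (Fin.tail v)) =ᶠ[𝓝 z] fun w =>
          iteratedFDeriv 𝕜 n (fderiv 𝕜 f) w (i.removeNth (Fin.tail v)) (v i.succ) := by
        have hf_le : ContDiffAt 𝕜 (n + 1) f z := hf.of_le (by norm_cast; lia)
        filter_upwards [hf_le.eventually (by simp)] with w hw using ih hw i _
      have hdiff : DifferentiableAt 𝕜 (iteratedFDeriv 𝕜 n (fderiv 𝕜 f)) z :=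
        hf'.differentiableAt_iteratedFDeriv (by norm_cast; lia)
      have hdiff_succ : DifferentiableAt 𝕜 (iteratedFDeriv 𝕜 (n + 1) f) z :=
        hf.differentiableAt_iteratedFDeriv (by norm_cast; lia)
      rw [hdiff_succ.iteratedFDeriv_succ_apply_left', ih_nhds.fderiv_eq, fderiv_clm_apply]
      · simp [fderiv_continuousMultilinear_apply_const_apply hdiff, iteratedFDeriv_succ_apply_left,
          tail_removeNth, removeNth_zero]
      all_goals fun_prop
    cases j using Fin.cases with
    | zero =>
      -- The induction cannot reach slot `0`, the outermost derivative: exchange it with slot `1`.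
      rw [← iteratedFDeriv_comp_swap_zero_one (by simpa [add_assoc, one_add_one_eq_two] using hf),
        apply_succ 0]
      congr 1
    | succ i => exact apply_succ i v

end IteratedFDeriv

section Taylor

variable {E F : Type*} [NormedAddCommGroup E] [NormedSpace ℝ E] [NormedAddCommGroup F]
  [NormedSpace ℝ F] {f : E → F} {p : ℕ} {z w : E} {L : ℝ}

/-- The Taylor polynomial of order `p` of `f` at `z`, as a function of the evaluation point `w`
rather than of the increment `w - z`. -/
noncomputable def taylorSum (p : ℕ) (f : E → F) (z w : E) : F :=
  ∑ i ∈ Finset.range (p + 1), (1 / (i ! : ℝ)) • iteratedFDeriv ℝ i f z (fun _ => w - z)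

theorem taylorSum_succ : taylorSum (p + 1) f z w =
    taylorSum p f z w + (1 / ((p + 1)! : ℝ)) • iteratedFDeriv ℝ (p + 1) f z (fun _ => w - z) :=
  Finset.sum_range_succ _ _

theorem hasFDerivAt_iteratedFDeriv_apply_sub (hf : ContDiffAt ℝ (p + 1) f z) :
    HasFDerivAt (fun w => iteratedFDeriv ℝ (p + 1) f z (fun _ => w - z))
      ((p + 1 : ℝ) • iteratedFDeriv ℝ p (fderiv ℝ f) z (fun _ => w - z)) w := by
  have hdiag : HasFDerivAt (fun (w : E) (_ : Fin (p + 1)) => w - z)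
      (ContinuousLinearMap.pi fun _ => ContinuousLinearMap.id ℝ E) w :=
    hasFDerivAt_pi.2 fun _ => (hasFDerivAt_id w).sub_const z
  refine (((iteratedFDeriv ℝ (p + 1) f z).hasFDerivAt _).comp w hdiag).congr_fderiv ?_
  ext u
  have hslot (j : Fin (p + 1)) :
      iteratedFDeriv ℝ (p + 1) f z (Function.update (fun _ => w - z) j u) =
        iteratedFDeriv ℝ p (fderiv ℝ f) z (fun _ => w - z) u := by
    rw [iteratedFDeriv_succ_apply_removeNth hf j, Fin.removeNth_update, Function.update_self]
    rfl
  simp [hslot, ContinuousMultilinearMap.linearDeriv_apply, ← Nat.cast_smul_eq_nsmul ℝ]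

theorem hasFDerivAt_taylorSum (hf : ContDiffAt ℝ (p + 1) f z) :
    HasFDerivAt (taylorSum (p + 1) f z) (taylorSum p (fderiv ℝ f) z w) w := by
  have hterm (i : ℕ) (hi : i ∈ Finset.range (p + 1)) : HasFDerivAt
      (fun w => (1 / ((i + 1)! : ℝ)) • iteratedFDeriv ℝ (i + 1) f z (fun _ => w - z))
      ((1 / (i ! : ℝ)) • iteratedFDeriv ℝ i (fderiv ℝ f) z (fun _ => w - z)) w := by
    have hfi : ContDiffAt ℝ (i + 1) f z := hf.of_le (by have := Finset.mem_range.1 hi; norm_cast)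
    refine ((hasFDerivAt_iteratedFDeriv_apply_sub hfi).const_smul
      (1 / ((i + 1)! : ℝ))).congr_fderiv ?_
    rw [smul_smul, Nat.factorial_succ]
    congr 1
    push_cast
    field_simp
  have htail : taylorSum (p + 1) f z = fun w => (∑ i ∈ Finset.range (p + 1),
      (1 / ((i + 1)! : ℝ)) • iteratedFDeriv ℝ (i + 1) f z (fun _ => w - z)) + f z := by
    ext w
    simp [taylorSum, Finset.sum_range_succ' _ (p + 1)]
  rw [htail]
  exact (HasFDerivAt.fun_sum hterm).add_const _

theorem integral_one_sub_pow_mul_self (n : ℕ) :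
    ∫ t in (0 : ℝ)..1, (1 - t) ^ n * t = 1 / ((n + 1) * (n + 2)) := by
  calc ∫ t in (0 : ℝ)..1, (1 - t) ^ n * t
      = ∫ t in (0 : ℝ)..1, (1 - t) ^ n * (1 - (1 - t)) := by simp
    _ = ∫ s in (0 : ℝ)..1, s ^ n * (1 - s) := by
      simpa using intervalIntegral.integral_comp_sub_left (a := 0) (b := 1)
        (fun s : ℝ => s ^ n * (1 - s)) 1
    _ = ∫ s in (0 : ℝ)..1, (s ^ n - s ^ (n + 1)) := by simp only [mul_one_sub, pow_succ]
    _ = 1 / ((n + 1) * (n + 2)) := by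
      rw [intervalIntegral.integral_sub (by simp) (by simp), integral_pow, integral_pow]
      simp only [one_pow, ne_eq, Nat.add_eq_zero_iff, one_ne_zero, and_false, not_false_eq_true,
        zero_pow, sub_zero]
      push_cast
      field_simp
      ring

theorem sub_taylorSum_eq_integral [CompleteSpace F] (hf : ContDiff ℝ (p + 1) f) :
    f w - taylorSum (p + 1) f z w = (p ! : ℝ)⁻¹ • ∫ t in (0 : ℝ)..1, (1 - t) ^ p •
      (iteratedFDeriv ℝ (p + 1) f (z + t • (w - z)) - iteratedFDeriv ℝ (p + 1) f z)
        (fun _ => w - z) := by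
  have hcont : Continuous fun t : ℝ => iteratedFDeriv ℝ (p + 1) f (z + t • (w - z)) :=
    (hf.continuous_iteratedFDeriv le_rfl).comp (by fun_prop)
  have htaylor : f w = taylorSum p f z w + (p ! : ℝ)⁻¹ • ∫ t in (0 : ℝ)..1,
      (1 - t) ^ p • iteratedFDeriv ℝ (p + 1) f (z + t • (w - z)) (fun _ => w - z) := by
    simpa [taylorSum] using map_add_eq_sum_add_integral_iteratedFDeriv (f := f) (x := z)
      (y := w - z) (n := p) fun t _ => hf.contDiffAt
  have hconst : (p ! : ℝ)⁻¹ • ∫ t in (0 : ℝ)..1,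
      (1 - t) ^ p • iteratedFDeriv ℝ (p + 1) f z (fun _ => w - z) =
        (1 / ((p + 1)! : ℝ)) • iteratedFDeriv ℝ (p + 1) f z (fun _ => w - z) := by
    rw [intervalIntegral.integral_smul_const, smul_smul, Nat.factorial_succ]
    congr 1
    simp [intervalIntegral.integral_comp_sub_left (fun s : ℝ => s ^ p)]
  simp_rw [sub_apply, smul_sub ((1 - _ : ℝ) ^ p)]
  rw [intervalIntegral.integral_sub (Continuous.intervalIntegrable (by fun_prop) _ _)
    (Continuous.intervalIntegrable (by fun_prop) _ _), smul_sub, hconst, taylorSum_succ, htaylor,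
    add_sub_add_left_eq_sub]

theorem norm_sub_taylorSum_le [CompleteSpace F] (hf : ContDiff ℝ p f)
    (hL : ∀ w, ‖iteratedFDeriv ℝ p f w - iteratedFDeriv ℝ p f z‖ ≤ L * ‖w - z‖) :
    ‖f w - taylorSum p f z w‖ ≤ L / (p + 1)! * ‖w - z‖ ^ (p + 1) := by
  cases p with
  | zero =>
    have hw := hL w
    simp only [iteratedFDeriv_zero_eq_comp, Function.comp_apply, ← map_sub,
      LinearIsometryEquiv.norm_map] at hw
    simpa [taylorSum] using hw
  | succ p =>
    have hintegrand (t : ℝ) (ht : t ∈ Ioc (0 : ℝ) 1) : ‖(1 - t) ^ p •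
        (iteratedFDeriv ℝ (p + 1) f (z + t • (w - z)) - iteratedFDeriv ℝ (p + 1) f z)
          (fun _ => w - z)‖ ≤ L * ‖w - z‖ ^ (p + 2) * ((1 - t) ^ p * t) := by
      have ht1 : 0 ≤ 1 - t := sub_nonneg.2 ht.2
      rw [norm_smul, Real.norm_of_nonneg (pow_nonneg ht1 p)]
      calc (1 - t) ^ p * ‖(iteratedFDeriv ℝ (p + 1) f (z + t • (w - z)) -
              iteratedFDeriv ℝ (p + 1) f z) (fun _ => w - z)‖
          ≤ (1 - t) ^ p * (L * ‖z + t • (w - z) - z‖ * ‖w - z‖ ^ (p + 1)) := by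
            gcongr
            refine (ContinuousMultilinearMap.le_of_opNorm_le (hL _) _).trans_eq ?_
            simp
        _ = L * ‖w - z‖ ^ (p + 2) * ((1 - t) ^ p * t) := by
            rw [add_sub_cancel_left, norm_smul, Real.norm_of_nonneg ht.1.le]
            ring
    rw [sub_taylorSum_eq_integral hf, norm_smul, norm_inv, RCLike.norm_natCast]
    calc (p ! : ℝ)⁻¹ * ‖∫ t in (0 : ℝ)..1, (1 - t) ^ p •
            (iteratedFDeriv ℝ (p + 1) f (z + t • (w - z)) - iteratedFDeriv ℝ (p + 1) f z)
              (fun _ => w - z)‖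
        ≤ (p ! : ℝ)⁻¹ * ∫ t in (0 : ℝ)..1, L * ‖w - z‖ ^ (p + 2) * ((1 - t) ^ p * t) := by
          gcongr
          exact intervalIntegral.norm_integral_le_of_norm_le zero_le_one (.of_forall hintegrand)
            (Continuous.intervalIntegrable (by fun_prop) _ _)
      _ = L / (p + 2)! * ‖w - z‖ ^ (p + 2) := by
          rw [intervalIntegral.integral_const_mul, integral_one_sub_pow_mul_self,
            Nat.factorial_succ (p + 1), Nat.factorial_succ p]
          push_cast
          field_simp
          ring

theorem norm_fderiv_sub_taylorSum_le [CompleteSpace F] (hf : ContDiff ℝ (p + 1) f)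
    (hL : ∀ w, ‖iteratedFDeriv ℝ (p + 1) f w - iteratedFDeriv ℝ (p + 1) f z‖ ≤ L * ‖w - z‖) :
    ‖fderiv ℝ f w - taylorSum p (fderiv ℝ f) z w‖ ≤ L / (p + 1)! * ‖w - z‖ ^ (p + 1) :=
  norm_sub_taylorSum_le (hf.fderiv_right le_rfl) fun w =>
    norm_iteratedFDeriv_fderiv_sub_iteratedFDeriv_fderiv.trans_le (hL w)

end Taylor

section ProdL2

variable {X Y F : Type*} [NormedAddCommGroup X] [NormedAddCommGroup Y]

theorem prod_norm_rpow_le_two_rpow_mul_add {q : ℝ} (hq : 2 ≤ q) (z : WithLp 2 (X × Y)) :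
    ‖z‖ ^ q ≤ 2 ^ (q / 2 - 1) * (‖z.fst‖ ^ q + ‖z.snd‖ ^ q) := by
  have sq_rpow (a : ℝ) (ha : 0 ≤ a) : (a ^ 2) ^ (q / 2) = a ^ q := by
    rw [← Real.rpow_natCast_mul ha, Nat.cast_ofNat, mul_div_cancel₀ q two_ne_zero]
  calc ‖z‖ ^ q = (‖z.fst‖ ^ 2 + ‖z.snd‖ ^ 2) ^ (q / 2) := by
        rw [← prod_norm_sq_eq_of_L2, sq_rpow _ (norm_nonneg z)]
    _ ≤ 2 ^ (q / 2 - 1) * ((‖z.fst‖ ^ 2) ^ (q / 2) + (‖z.snd‖ ^ 2) ^ (q / 2)) := by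
        have hq' : 1 ≤ q / 2 := by linarith
        have h := NNReal.rpow_add_le_mul_rpow_add_rpow (‖z.fst‖₊ ^ 2) (‖z.snd‖₊ ^ 2) hq'
        simpa only [← NNReal.coe_le_coe, NNReal.coe_rpow, NNReal.coe_add, NNReal.coe_mul,
          NNReal.coe_pow, NNReal.coe_ofNat, coe_nnnorm] using h
    _ = 2 ^ (q / 2 - 1) * (‖z.fst‖ ^ q + ‖z.snd‖ ^ q) := by
        rw [sq_rpow _ (norm_nonneg _), sq_rpow _ (norm_nonneg _)]

variable [NormedSpace ℝ X] [NormedSpace ℝ Y] [NormedAddCommGroup F] [NormedSpace ℝ F]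
  {D : WithLp 2 (X × Y) →L[ℝ] F}

theorem sq_opNorm_le_sq_opNorm_comp_inl_add :
    ‖D‖ ^ 2 ≤ ‖D ∘L (prodContinuousLinearEquiv 2 ℝ X Y).symm ∘L .inl ℝ X Y‖ ^ 2 +
      ‖D ∘L (prodContinuousLinearEquiv 2 ℝ X Y).symm ∘L .inr ℝ X Y‖ ^ 2 := by
  set DX := D ∘L (prodContinuousLinearEquiv 2 ℝ X Y).symm ∘L .inl ℝ X Y
  set DY := D ∘L (prodContinuousLinearEquiv 2 ℝ X Y).symm ∘L .inr ℝ X Y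
  refine (Real.le_sqrt (norm_nonneg D) (by positivity)).1 <|
    D.opNorm_le_bound (Real.sqrt_nonneg _) fun w => ?_
  have hDw : D w = DX w.fst + DY w.snd := by
    simp only [DX, DY, ContinuousLinearMap.comp_apply, ← map_add]
    exact congrArg D ((prodContinuousLinearEquiv 2 ℝ X Y).injective (by simp [Prod.ext_iff]))
  calc ‖D w‖ ≤ ‖DX‖ * ‖w.fst‖ + ‖DY‖ * ‖w.snd‖ := by
        rw [hDw]
        exact norm_add_le_of_le (DX.le_opNorm _) (DY.le_opNorm _)
    _ ≤ √(‖DX‖ ^ 2 + ‖DY‖ ^ 2) * √(‖w.fst‖ ^ 2 + ‖w.snd‖ ^ 2) := by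
        simpa using Real.sum_mul_le_sqrt_mul_sqrt Finset.univ ![‖DX‖, ‖DY‖] ![‖w.fst‖, ‖w.snd‖]
    _ = √(‖DX‖ ^ 2 + ‖DY‖ ^ 2) * ‖w‖ := by
        rw [prod_norm_eq_of_L2]

theorem opNorm_le_mul_prod_norm_pow {C : ℝ} {p : ℕ} (hp : p ≠ 0) (hC : 0 ≤ C)
    {z : WithLp 2 (X × Y)}
    (hX : ‖D ∘L (prodContinuousLinearEquiv 2 ℝ X Y).symm ∘L .inl ℝ X Y‖ ≤ C * ‖z.fst‖ ^ p)
    (hY : ‖D ∘L (prodContinuousLinearEquiv 2 ℝ X Y).symm ∘L .inr ℝ X Y‖ ≤ C * ‖z.snd‖ ^ p) :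
    ‖D‖ ≤ C * ‖z‖ ^ p := by
  refine (pow_le_pow_iff_left₀ (norm_nonneg D) (by positivity) two_ne_zero).1 ?_
  calc ‖D‖ ^ 2 ≤ (C * ‖z.fst‖ ^ p) ^ 2 + (C * ‖z.snd‖ ^ p) ^ 2 := by
        refine sq_opNorm_le_sq_opNorm_comp_inl_add.trans ?_
        gcongr
    _ = C ^ 2 * ((‖z.fst‖ ^ 2) ^ p + (‖z.snd‖ ^ 2) ^ p) := by ring
    _ ≤ C ^ 2 * (‖z.fst‖ ^ 2 + ‖z.snd‖ ^ 2) ^ p := by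
        gcongr
        exact pow_add_pow_le (sq_nonneg _) (sq_nonneg _) hp
    _ = (C * ‖z‖ ^ p) ^ 2 := by
        rw [← prod_norm_sq_eq_of_L2]
        ring

variable {f : WithLp 2 (X × Y) → F} {x : X} {y : Y}

theorem hasFDerivAt_comp_toLp_left (hf : HasFDerivAt f D (toLp 2 (x, y))) :
    HasFDerivAt (fun x' => f (toLp 2 (x', y)))
      (D ∘L (prodContinuousLinearEquiv 2 ℝ X Y).symm ∘L .inl ℝ X Y) x :=
  hf.comp x ((prodContinuousLinearEquiv 2 ℝ X Y).symm.hasFDerivAt.comp x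
    (hasFDerivAt_prodMk_left x y))

theorem hasFDerivAt_comp_toLp_right (hf : HasFDerivAt f D (toLp 2 (x, y))) :
    HasFDerivAt (fun y' => f (toLp 2 (x, y')))
      (D ∘L (prodContinuousLinearEquiv 2 ℝ X Y).symm ∘L .inr ℝ X Y) y :=
  hf.comp y ((prodContinuousLinearEquiv 2 ℝ X Y).symm.hasFDerivAt.comp y
    (hasFDerivAt_prodMk_right x y))

end ProdL2

section RegularizedTaylor

variable {X Y : Type*} [NormedAddCommGroup X] [NormedSpace ℝ X] [NormedAddCommGroup Y]
  [NormedSpace ℝ Y] {p : ℕ}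

/-- The order `p` Taylor model at `(x, y)` of a function `g` of two variables, to be minimized in
`x'` and maximized in `y'`. The paper's `Ω` is the case `κ = M √2 ^ (p - 1)`. -/
noncomputable def regularizedTaylor (p : ℕ) (κ : ℝ) (g : WithLp 2 (X × Y) → ℝ) (x : X) (y : Y)
    (x' : X) (y' : Y) : ℝ :=
  taylorSum p g (toLp 2 (x, y)) (toLp 2 (x', y')) + κ / (p + 1)! * ‖x' - x‖ ^ (p + 1) -
    κ / (p + 1)! * ‖y' - y‖ ^ (p + 1)

variable {κ L : ℝ} {g : WithLp 2 (X × Y) → ℝ} {x xt : X} {y yt : Y}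

theorem le_sub_of_regularizedTaylor_le (hg : ContDiff ℝ p g)
    (hL : ∀ w, ‖iteratedFDeriv ℝ p g w - iteratedFDeriv ℝ p g (toLp 2 (x, y))‖ ≤
      L * ‖w - toLp 2 (x, y)‖)
    (hle : regularizedTaylor p κ g x y xt y ≤ regularizedTaylor p κ g x y x yt) :
    (κ - L) / (p + 1)! * (‖xt - x‖ ^ (p + 1) + ‖yt - y‖ ^ (p + 1)) ≤
      g (toLp 2 (x, yt)) - g (toLp 2 (xt, y)) := by
  have hx := norm_sub_taylorSum_le hg hL (w := toLp 2 (xt, y))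
  have hy := norm_sub_taylorSum_le hg hL (w := toLp 2 (x, yt))
  rw [← toLp_sub, Prod.mk_sub_mk, sub_self, norm_toLp_fst, Real.norm_eq_abs] at hx
  rw [← toLp_sub, Prod.mk_sub_mk, sub_self, norm_toLp_snd, Real.norm_eq_abs] at hy
  simp only [regularizedTaylor, sub_self, norm_zero, zero_pow p.succ_ne_zero, mul_zero, add_zero,
    sub_zero] at hle
  rw [sub_div, sub_mul, mul_add, mul_add]
  linarith [le_of_abs_le hx, neg_le_of_abs_le hy]

end RegularizedTaylor

section Stationarity

variable {X Y : Type*} [NormedAddCommGroup X] [InnerProductSpace ℝ X] [NormedAddCommGroup Y]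
  [InnerProductSpace ℝ Y] {p : ℕ}

theorem hasFDerivAt_norm_sub_pow (hp : p ≠ 0) (x a : X) :
    HasFDerivAt (fun u => ‖u - x‖ ^ (p + 1))
      (((p + 1) * ‖a - x‖ ^ (p - 1)) • innerSL ℝ (a - x)) a := by
  obtain ⟨k, rfl⟩ := Nat.exists_eq_succ_of_ne_zero hp
  have h : HasFDerivAt (fun u : X => ‖u‖ ^ (k + 2)) (((k + 2) * ‖a - x‖ ^ k) • innerSL ℝ (a - x))
      (a - x) := by
    simpa [← Real.rpow_natCast] using
      hasFDerivAt_norm_rpow (a - x) (p := (k : ℝ) + 2) (by linarith [k.cast_nonneg (α := ℝ)])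
  refine (h.comp a ((hasFDerivAt_id a).sub_const x)).congr_fderiv ?_
  simp [add_assoc, one_add_one_eq_two]

theorem norm_le_of_isLocalExtr_add_mul_norm_sub_pow (hp : p ≠ 0) {f : X → ℝ} {D : X →L[ℝ] ℝ}
    {a x : X} {c : ℝ} (hf : HasFDerivAt f D a)
    (hext : IsLocalExtr (fun u => f u + c * ‖u - x‖ ^ (p + 1)) a) :
    ‖D‖ ≤ |c| * (p + 1) * ‖a - x‖ ^ p := by
  have hD : D = -(c • ((p + 1) * ‖a - x‖ ^ (p - 1)) • innerSL ℝ (a - x)) :=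
    eq_neg_of_add_eq_zero_left <|
      hext.hasFDerivAt_eq_zero (hf.add ((hasFDerivAt_norm_sub_pow hp x a).const_mul c))
  rw [hD, norm_neg, norm_smul, norm_smul, innerSL_apply_norm, Real.norm_eq_abs,
    Real.norm_of_nonneg (by positivity), mul_assoc, mul_assoc, pow_sub_one_mul hp]

variable {κ L : ℝ} {g : WithLp 2 (X × Y) → ℝ} {x xt : X} {y yt : Y}

theorem norm_fderiv_le_of_isLocalExtr_regularizedTaylor (hp : p ≠ 0) (hg : ContDiff ℝ p g)
    (hL : ∀ w, ‖iteratedFDeriv ℝ p g w - iteratedFDeriv ℝ p g (toLp 2 (x, y))‖ ≤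
      L * ‖w - toLp 2 (x, y)‖)
    (hx : IsLocalExtr (fun x' => regularizedTaylor p κ g x y x' yt) xt)
    (hy : IsLocalExtr (regularizedTaylor p κ g x y xt) yt) :
    ‖fderiv ℝ g (toLp 2 (xt, yt))‖ ≤
      (|κ| + L) / p ! * ‖toLp 2 (xt, yt) - toLp 2 (x, y)‖ ^ p := by
  obtain ⟨p, rfl⟩ := Nat.exists_eq_succ_of_ne_zero hp
  set z := toLp 2 (x, y)
  set w := toLp 2 (xt, yt)
  set D := taylorSum p (fderiv ℝ g) z w
  have hD : HasFDerivAt (taylorSum (p + 1) g z) D w :=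
    hasFDerivAt_taylorSum (by exact_mod_cast hg.contDiffAt)
  have hcoef : |κ / (p + 2)!| * ((p + 1 : ℕ) + 1) = |κ| / (p + 1)! := by
    rw [abs_div, Nat.abs_cast, Nat.factorial_succ (p + 1)]
    push_cast
    field_simp
  have hDX : ‖D ∘L (prodContinuousLinearEquiv 2 ℝ X Y).symm ∘L .inl ℝ X Y‖ ≤
      |κ| / (p + 1)! * ‖xt - x‖ ^ (p + 1) := by
    rw [← hcoef]
    refine norm_le_of_isLocalExtr_add_mul_norm_sub_pow hp
      ((hasFDerivAt_comp_toLp_left hD).sub_const (κ / (p + 2)! * ‖yt - y‖ ^ (p + 2))) ?_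
    simpa only [regularizedTaylor, sub_add_eq_add_sub] using hx
  have hDY : ‖D ∘L (prodContinuousLinearEquiv 2 ℝ X Y).symm ∘L .inr ℝ X Y‖ ≤
      |κ| / (p + 1)! * ‖yt - y‖ ^ (p + 1) := by
    rw [← hcoef, ← abs_neg]
    refine norm_le_of_isLocalExtr_add_mul_norm_sub_pow hp
      ((hasFDerivAt_comp_toLp_right hD).add_const (κ / (p + 2)! * ‖xt - x‖ ^ (p + 2))) ?_
    simp only [neg_mul, ← sub_eq_add_neg]
    exact hy
  calc ‖fderiv ℝ g w‖ ≤ ‖D‖ + ‖fderiv ℝ g w - D‖ := norm_le_norm_add_norm_sub' (fderiv ℝ g w) D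
    _ ≤ |κ| / (p + 1)! * ‖w - z‖ ^ (p + 1) + L / (p + 1)! * ‖w - z‖ ^ (p + 1) :=
        add_le_add (opNorm_le_mul_prod_norm_pow hp (by positivity) (z := w - z) hDX hDY)
          (norm_fderiv_sub_taylorSum_le (by exact_mod_cast hg) hL)
    _ = (|κ| + L) / (p + 1)! * ‖w - z‖ ^ (p + 1) := by ring

end Stationarity

section Constants

variable {p : ℕ} {M : ℝ}

theorem rpow_add_one_div_le_of_le_mul_pow {G C r : ℝ} (hp : p ≠ 0) (hG : 0 ≤ G) (hC : 0 ≤ C)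
    (hr : 0 ≤ r) (h : G ≤ C * r ^ p) :
    G ^ (((p : ℝ) + 1) / p) ≤ C ^ (((p : ℝ) + 1) / p) * r ^ (p + 1) := by
  have hpow : (r ^ p) ^ (((p : ℝ) + 1) / p) = r ^ (p + 1) := by
    rw [← Real.rpow_natCast_mul hr, mul_div_cancel₀ _ (by exact_mod_cast hp)]
    exact_mod_cast Real.rpow_natCast r (p + 1)
  rw [← hpow, ← Real.mul_rpow hC (by positivity)]
  exact Real.rpow_le_rpow hG h (by positivity)

theorem sqrt_two_pow_mul_rpow_mul_two_rpow (hp : p ≠ 0) (hM : 0 ≤ M) :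
    (√2 ^ (p + 1) * M) ^ (((p : ℝ) + 1) / p) * 2 ^ (((p : ℝ) + 1) / 2 - 1) =
      2 ^ ((2 * (p : ℝ) ^ 2 + p + 1) / (2 * p)) * M ^ (1 / (p : ℝ)) * M := by
  have hp' : (p : ℝ) ≠ 0 := by exact_mod_cast hp
  have hsqrt : √2 ^ (p + 1) = (2 : ℝ) ^ (((p : ℝ) + 1) / 2) := by
    rw [Real.sqrt_eq_rpow, ← Real.rpow_mul_natCast zero_le_two]
    push_cast
    ring_nf
  have htwo : (2 : ℝ) ^ (((p : ℝ) + 1) / 2 * (((p : ℝ) + 1) / p)) * 2 ^ (((p : ℝ) + 1) / 2 - 1) =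
      2 ^ ((2 * (p : ℝ) ^ 2 + p + 1) / (2 * p)) := by
    rw [← Real.rpow_add two_pos]
    congr 1
    field_simp
    ring
  have hMpow : M ^ (((p : ℝ) + 1) / p) = M ^ (1 / (p : ℝ)) * M := by
    rw [add_div, div_self hp', add_comm, Real.rpow_add_one' hM (by positivity)]
  rw [Real.mul_rpow (by positivity) hM, hsqrt, ← Real.rpow_mul zero_le_two, hMpow, ← htwo]
  ring

theorem abs_add_div_factorial_le_sqrt_two_pow_mul {L : ℝ} (hp : p ≠ 0) (hM : 0 ≤ M)
    (hL : L ≤ M * √2 ^ (p - 1)) : (|M * √2 ^ (p - 1)| + L) / p ! ≤ √2 ^ (p + 1) * M := by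
  have hκ : 0 ≤ M * √2 ^ (p - 1) := by positivity
  calc (|M * √2 ^ (p - 1)| + L) / p !
      ≤ (M * √2 ^ (p - 1) + M * √2 ^ (p - 1)) / p ! := by
        rw [abs_of_nonneg hκ]
        gcongr
    _ ≤ M * √2 ^ (p - 1) + M * √2 ^ (p - 1) :=
        div_le_self (by positivity) (by exact_mod_cast Nat.one_le_iff_ne_zero.2 p.factorial_ne_zero)
    _ = √2 ^ (p + 1) * M := by
        rw [pow_succ, ← pow_sub_one_mul hp]
        linear_combination (-M * √2 ^ (p - 1)) * Real.mul_self_sqrt zero_le_two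

theorem add_div_le_mul_sqrt_two_pow {L : ℝ} (hp : 2 ≤ p) (hL : 0 ≤ L) (hM : √2 * p * L ≤ M) :
    L + M / p ≤ M * √2 ^ (p - 1) := by
  have hp' : (2 : ℝ) ≤ p := by exact_mod_cast hp
  have hM₀ : 0 ≤ M := hM.trans' (by positivity)
  have hsqrt : 1 ≤ √2 := Real.one_le_sqrt.2 one_le_two
  have hLM : L ≤ M / 2 := by
    rw [le_div_iff₀' two_pos]
    calc 2 * L ≤ 1 * p * L := by rw [one_mul]; gcongr
      _ ≤ √2 * p * L := by gcongr
      _ ≤ M := hM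
  calc L + M / p ≤ M / 2 + M / 2 := by gcongr
    _ = M * 1 := by ring
    _ ≤ M * √2 ^ (p - 1) := by
      gcongr
      exact one_le_pow₀ hsqrt

end Constants

theorem gradient_norm_duality_gap_bound_general {X Y : Type*} [NormedAddCommGroup X]
    [InnerProductSpace ℝ X] [NormedAddCommGroup Y] [InnerProductSpace ℝ Y] {p : ℕ} (hp : p ≠ 0)
    {L M : ℝ} (hM : 0 < M) (hLM : L + M / p ≤ M * √2 ^ (p - 1)) {g : WithLp 2 (X × Y) → ℝ}
    (hg : ContDiff ℝ p g) {x xt : X} {y yt : Y}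
    (hL : ∀ w, ‖iteratedFDeriv ℝ p g w - iteratedFDeriv ℝ p g (toLp 2 (x, y))‖ ≤
      L * ‖w - toLp 2 (x, y)‖)
    (hmin : IsLocalMin (fun x' => regularizedTaylor p (M * √2 ^ (p - 1)) g x y x' yt) xt)
    (hmax : IsLocalMax (regularizedTaylor p (M * √2 ^ (p - 1)) g x y xt) yt)
    (hle : regularizedTaylor p (M * √2 ^ (p - 1)) g x y xt y ≤
      regularizedTaylor p (M * √2 ^ (p - 1)) g x y x yt) :
    ‖fderiv ℝ g (toLp 2 (xt, yt))‖ ^ (((p : ℝ) + 1) / p) /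
        (2 ^ ((2 * (p : ℝ) ^ 2 + p + 1) / (2 * p)) * p * (p + 1)! * M ^ (1 / (p : ℝ))) ≤
      g (toLp 2 (x, yt)) - g (toLp 2 (xt, y)) := by
  have hp₁ : (1 : ℝ) ≤ p := by exact_mod_cast Nat.one_le_iff_ne_zero.2 hp
  set r : ℝ := ‖toLp 2 (xt, yt) - toLp 2 (x, y)‖
  set S : ℝ := ‖xt - x‖ ^ (p + 1) + ‖yt - y‖ ^ (p + 1)
  have hgrad : ‖fderiv ℝ g (toLp 2 (xt, yt))‖ ≤ √2 ^ (p + 1) * M * r ^ p := by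
    refine (norm_fderiv_le_of_isLocalExtr_regularizedTaylor hp hg hL (.inl hmin)
      (.inr hmax)).trans ?_
    gcongr
    exact abs_add_div_factorial_le_sqrt_two_pow_mul hp hM.le
      (hLM.trans' (le_add_of_nonneg_right (by positivity)))
  have hgap : M / (p * (p + 1)!) * S ≤ g (toLp 2 (x, yt)) - g (toLp 2 (xt, y)) := by
    refine le_trans ?_ (le_sub_of_regularizedTaylor_le hg hL hle)
    rw [← div_div]
    gcongr
    exact le_sub_iff_add_le'.2 hLM
  have hmean : r ^ (p + 1) ≤ 2 ^ (((p : ℝ) + 1) / 2 - 1) * S := by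
    have h := prod_norm_rpow_le_two_rpow_mul_add (q := (p : ℝ) + 1) (by linarith)
      (toLp 2 (xt, yt) - toLp 2 (x, y))
    exact_mod_cast h
  refine le_trans ?_ hgap
  rw [div_le_iff₀ (by positivity)]
  calc ‖fderiv ℝ g (toLp 2 (xt, yt))‖ ^ (((p : ℝ) + 1) / p)
      ≤ (√2 ^ (p + 1) * M) ^ (((p : ℝ) + 1) / p) * r ^ (p + 1) :=
        rpow_add_one_div_le_of_le_mul_pow hp (by positivity) (by positivity) (by positivity) hgrad
    _ ≤ (√2 ^ (p + 1) * M) ^ (((p : ℝ) + 1) / p) * (2 ^ (((p : ℝ) + 1) / 2 - 1) * S) := by gcongr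
    _ = 2 ^ ((2 * (p : ℝ) ^ 2 + p + 1) / (2 * p)) * M ^ (1 / (p : ℝ)) * M * S := by
        rw [← mul_assoc, sqrt_two_pow_mul_rpow_mul_two_rpow hp hM.le]
    _ = M / (p * (p + 1)!) * S *
          (2 ^ ((2 * (p : ℝ) ^ 2 + p + 1) / (2 * p)) * p * (p + 1)! * M ^ (1 / (p : ℝ))) := by
        field_simp

end SaddlePoint

/-- The paper's saddle-point version of Lemma 5.2: if `M ≥ √2 p L_p` and `(x̃,ỹ)` is a saddle
point of the regularized Taylor model `Ω_{(x,y),p,M}`, then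
`‖∇g(x̃,ỹ)‖^{(p+1)/p} / (2^{(2p²+p+1)/(2p)} p (p+1)! M^{1/p}) ≤ g(x, ỹ) − g(x̃, y)`. -/
theorem gradient_norm_duality_gap_bound {n m : ℕ} (p : ℕ) (hp : 2 ≤ p)
    (Lp M : ℝ) (hLp : 0 < Lp) (hM : Real.sqrt 2 * p * Lp ≤ M)
    (g : WithLp 2 (EuclideanSpace ℝ (Fin n) × EuclideanSpace ℝ (Fin m)) → ℝ)
    (hg : ContDiff ℝ (p : ℕ∞) g)
    (hLip : ∀ z₁ z₂, ‖iteratedFDeriv ℝ p g z₁ - iteratedFDeriv ℝ p g z₂‖ ≤ Lp * ‖z₁ - z₂‖)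
    (x xt : EuclideanSpace ℝ (Fin n)) (y yt : EuclideanSpace ℝ (Fin m))
    (hsaddle : ∀ (x' : EuclideanSpace ℝ (Fin n)) (y' : EuclideanSpace ℝ (Fin m)),
      omegaModel p M g x y (mkZ xt y') ≤ omegaModel p M g x y (mkZ xt yt) ∧
      omegaModel p M g x y (mkZ xt yt) ≤ omegaModel p M g x y (mkZ x' yt)) :
    ‖gradient g (mkZ xt yt)‖ ^ (((p : ℝ) + 1) / p)
        / ((2 : ℝ) ^ ((2 * (p : ℝ) ^ 2 + p + 1) / (2 * p)) * p * (Nat.factorial (p + 1) : ℝ)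
            * M ^ (1 / (p : ℝ)))
      ≤ g (mkZ x yt) - g (mkZ xt y) := by
  have hnorm : ‖gradient g (mkZ xt yt)‖ = ‖fderiv ℝ g (mkZ xt yt)‖ :=
    LinearIsometryEquiv.norm_map _ _
  rw [hnorm]
  -- `omegaModel p M g x y (mkZ x' y')` unfolds to `regularizedTaylor`.
  exact gradient_norm_duality_gap_bound_general (by lia) (hM.trans_lt' (by positivity))
    (add_div_le_mul_sqrt_two_pow hp hLp.le hM) hg (fun w => hLip w _)
    (.of_forall fun x' => (hsaddle x' yt).2) (.of_forall fun y' => (hsaddle xt y').1)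
    ((hsaddle x y).1.trans (hsaddle x y).2)
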